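/- arXiv:math/0209109 — 2 statements merged into one kernel-verified Lean document; each statement's English description precedes it below -/
import Mathlib

section
/- For every n ≥ 2 and every partition of {1,…,n+1} into three nonempty sets arranged as X|Y|Z, the bracket identities [X | Y∪Z ; X□(Y|Z)] = X|Y|Z and [X∪Y | Z ; (X|Y)□Z] = X|Y|Z hold (in particular, in each case C|D = X□(Y|Z), resp. (X|Y)□Z, lies in the appropriate class Q so that the bracket is defined). -/
namespace SU

/-- min of a finset of naturals (0 for the empty set). -/
def fmin (s : Finset ℕ) : ℕ := s.min.untopD 0
/-- max of a finset of naturals (0 for the empty set). -/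
def fmax (s : Finset ℕ) : ℕ := s.max.unbotD 0

/-- `L` is an ordered partition of the finite set `S`. -/
def IsOrderedPartition (S : Finset ℕ) (L : List (Finset ℕ)) : Prop :=
  (∀ B ∈ L, B ≠ ∅) ∧ List.Pairwise Disjoint L ∧ L.foldr (· ∪ ·) ∅ = S

/-- delete empty blocks. -/
def remEmpty (L : List (Finset ℕ)) : List (Finset ℕ) :=
  L.filter (fun s => decide (s ≠ ∅))

/-- `I_S(x)`: the (1-based) position of `x` in the increasing enumeration of `S`. -/
def iord (S : Finset ℕ) (x : ℕ) : ℕ := (S.filter (· ≤ x)).card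

/-- `I_S⁻¹(k)`: the `k`-th smallest element of `S` (1-based). -/
def iinv (S : Finset ℕ) (k : ℕ) : ℕ := (S.sort (· ≤ ·)).getD (k - 1) 0

/-- lower disjoint union `A ⊔̲ B` with respect to the ambient set `U`. -/
def lcup (U A B : Finset ℕ) : Finset ℕ :=
  if A = ∅ ∨ B = ∅ then A ∪ B
  else if fmin B = fmin (U \ A) then
    B.image (fun b => iord (U \ A) b + A.card - 1) ∪ Finset.Icc 1 A.card
  else B.image (fun b => iord (U \ A) b + A.card - 1)

/-- upper disjoint union `A ⊔̄ B` with respect to the ambient set `U`. -/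
def ucup (U A B : Finset ℕ) : Finset ℕ :=
  if A = ∅ ∨ B = ∅ then A ∪ B
  else if fmax A = fmax (U \ B) then
    A.image (iord (U \ B)) ∪ Finset.Icc (U.card - B.card) (U.card - 1)
  else A.image (iord (U \ B))

/-- `A □ (B_1|⋯|B_k) = (B_1|⋯|B_k) □ A`, with ambient set `U`. -/
def box (U A : Finset ℕ) (Bs : List (Finset ℕ)) : List (Finset ℕ) :=
  if fmax A = fmax U then Bs.map (fun B => ucup U B A)
  else Bs.map (fun B => lcup U A B)

/-- 2-block ordered partitions of `{1,…,n}`. -/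
def IsPart2 (n : ℕ) (C D : Finset ℕ) : Prop :=
  C ≠ ∅ ∧ D ≠ ∅ ∧ Disjoint C D ∧ C ∪ D = Finset.Icc 1 n

/-- `C|D ∈ Q_{r,1}(n)`. -/
def memQr1 (r n : ℕ) (C D : Finset ℕ) : Prop :=
  IsPart2 n C D ∧ (Finset.Icc 1 r ⊆ C ∨ Finset.Icc 1 r ⊆ D)

/-- `C|D ∈ Q_{1,s}(n)`. -/
def memQ1s (s n : ℕ) (C D : Finset ℕ) : Prop :=
  IsPart2 n C D ∧ (Finset.Icc (n - s + 1) n ⊆ C ∨ Finset.Icc (n - s + 1) n ⊆ D)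

end SU
namespace SU

/-- The bracket `[A|B ; C|D]` (as a relation: `bracketRel n A B C D L` holds when one
of the defining cases of the bracket applies and produces `L`, empty blocks deleted).
Here `A|B` is a 2-block partition of `{1,…,n+1}` with `#A = p`, `#B = q`, and `C|D`
is a 2-block partition of `{1,…,n}`. -/
def bracketRel (n : ℕ) (A B C D : Finset ℕ) (L : List (Finset ℕ)) : Prop :=
  ((n+1) ∈ B ∧ memQr1 A.card n C D ∧
    L = remEmpty [A,
      (Finset.Icc (n - B.card + 1) n ∩ C).image (fun x => iinv B (x + 1 - A.card)),
      (Finset.Icc (n - B.card + 1) n ∩ D).image (fun x => iinv B (x + 1 - A.card))]) ∨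
  ((n+1) ∈ B ∧ memQ1s B.card n C D ∧
    L = remEmpty [(Finset.Icc 1 A.card ∩ C).image (iinv A),
      (Finset.Icc 1 A.card ∩ D).image (iinv A), B]) ∨
  ((n+1) ∈ A ∧ memQ1s A.card n C D ∧
    L = remEmpty [A, (Finset.Icc 1 B.card ∩ C).image (iinv B),
      (Finset.Icc 1 B.card ∩ D).image (iinv B)]) ∨
  ((n+1) ∈ A ∧ memQr1 B.card n C D ∧
    L = remEmpty [
      (Finset.Icc (n - A.card + 1) n ∩ C).image (fun x => iinv A (x + 1 - B.card)),
      (Finset.Icc (n - A.card + 1) n ∩ D).image (fun x => iinv A (x + 1 - B.card)), B])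

lemma iinv_emb (V : Finset ℕ) (i : Fin V.card) : iinv V (i.1 + 1) = V.orderEmbOfFin rfl i := by
  rw [Finset.orderEmbOfFin_apply]
  unfold iinv
  rw [List.getD_eq_getElem _ _ (by simp)]
  simp

lemma iord_emb (V : Finset ℕ) (i : Fin V.card) : iord V (V.orderEmbOfFin rfl i) = i.1 + 1 := by
  unfold iord
  have : V.filter (· ≤ V.orderEmbOfFin rfl i) =
      (Finset.Iic i).map (V.orderEmbOfFin rfl).toEmbedding := by
    ext b
    simp only [Finset.mem_filter, Finset.mem_map, Finset.mem_Iic]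
    constructor
    · rintro ⟨hb, hle⟩
      have : b ∈ Set.range (V.orderEmbOfFin rfl) := by
        rw [Finset.range_orderEmbOfFin]; exact hb
      obtain ⟨j, rfl⟩ := this
      exact ⟨j, by simpa using hle, rfl⟩
    · rintro ⟨j, hj, rfl⟩
      exact ⟨Finset.orderEmbOfFin_mem V rfl j, by simpa using hj⟩
  rw [this, Finset.card_map, Fin.card_Iic]

lemma iord_spec (V : Finset ℕ) (b : ℕ) (hb : b ∈ V) :
    1 ≤ iord V b ∧ iord V b ≤ V.card ∧ iinv V (iord V b) = b := by
  have : b ∈ Set.range (V.orderEmbOfFin rfl) := by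
    rw [Finset.range_orderEmbOfFin]; exact hb
  obtain ⟨j, rfl⟩ := this
  rw [iord_emb, iinv_emb]
  have := j.2
  exact ⟨by omega, by omega, rfl⟩

lemma iinv_spec (V : Finset ℕ) (k : ℕ) (h1 : 1 ≤ k) (h2 : k ≤ V.card) :
    iinv V k ∈ V ∧ iord V (iinv V k) = k := by
  have h := iinv_emb V ⟨k - 1, by omega⟩
  have h' := iord_emb V ⟨k - 1, by omega⟩
  simp only [Nat.sub_add_cancel h1] at h h'
  rw [h]
  exact ⟨Finset.orderEmbOfFin_mem V rfl _, h'⟩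

lemma iinv_zero (V : Finset ℕ) : iinv V 0 = iinv V 1 := rfl

lemma iord_mono (V : Finset ℕ) {a b : ℕ} (h : a ≤ b) : iord V a ≤ iord V b := by
  unfold iord
  apply Finset.card_le_card
  intro x
  simp only [Finset.mem_filter]
  rintro ⟨h1, h2⟩
  exact ⟨h1, by omega⟩

lemma iinv_one_le (V : Finset ℕ) (b : ℕ) (hb : b ∈ V) : iinv V 1 ≤ b := by
  obtain ⟨h1, h2, h3⟩ := iord_spec V b hb
  obtain ⟨h4, h5⟩ := iinv_spec V 1 le_rfl (by omega)
  by_contra h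
  have := iord_mono V (show b ≤ iinv V 1 by omega)
  have e : iord V b = 1 := by omega
  rw [e] at h3
  omega

lemma le_iinv_card (V : Finset ℕ) (b : ℕ) (hb : b ∈ V) : b ≤ iinv V V.card := by
  obtain ⟨h1, h2, h3⟩ := iord_spec V b hb
  obtain ⟨h4, h5⟩ := iinv_spec V V.card (by omega) (by omega)
  by_contra h
  have := iord_mono V (show iinv V V.card ≤ b by omega)
  have e : iord V b = V.card := by omega
  rw [e] at h3
  omega

lemma fmin_spec (s : Finset ℕ) (h : s.Nonempty) : fmin s ∈ s ∧ ∀ b ∈ s, fmin s ≤ b := by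
  have : fmin s = s.min' h := by
    unfold fmin; rw [← Finset.coe_min' h]; rfl
  rw [this]
  exact ⟨s.min'_mem h, fun b hb => s.min'_le b hb⟩

lemma fmax_spec (s : Finset ℕ) (h : s.Nonempty) : fmax s ∈ s ∧ ∀ b ∈ s, b ≤ fmax s := by
  have : fmax s = s.max' h := by
    unfold fmax; rw [← Finset.coe_max' h]; rfl
  rw [this]
  exact ⟨s.max'_mem h, fun b hb => s.le_max' b hb⟩

lemma fmin_iff (V P : Finset ℕ) (hP : P.Nonempty) (hPV : P ⊆ V) :
    fmin P = fmin V ↔ iinv V 1 ∈ P := by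
  obtain ⟨p1, p2⟩ := fmin_spec P hP
  obtain ⟨v1, v2⟩ := fmin_spec V (hP.mono hPV)
  have hc := Finset.card_pos.2 (hP.mono hPV)
  have m := (iinv_spec V 1 le_rfl hc).1
  have e : fmin V = iinv V 1 := le_antisymm (v2 _ m) (iinv_one_le V _ v1)
  rw [e]
  constructor
  · intro h; rwa [h] at p1
  · intro h; exact le_antisymm (p2 _ h) (iinv_one_le V _ (hPV p1))

lemma fmax_iff (V P : Finset ℕ) (hP : P.Nonempty) (hPV : P ⊆ V) :
    fmax P = fmax V ↔ iinv V V.card ∈ P := by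
  obtain ⟨p1, p2⟩ := fmax_spec P hP
  obtain ⟨v1, v2⟩ := fmax_spec V (hP.mono hPV)
  have hc := Finset.card_pos.2 (hP.mono hPV)
  have m := (iinv_spec V V.card hc le_rfl).1
  have e : fmax V = iinv V V.card := le_antisymm (le_iinv_card V _ v1) (v2 _ m)
  rw [e]
  constructor
  · intro h; rwa [h] at p1
  · intro h; exact le_antisymm (le_iinv_card V _ (hPV p1)) (p2 _ h)

lemma mem_lcup (n : ℕ) (U W P V : Finset ℕ) (hV : U \ W = V) (hW : W.Nonempty)
    (hP : P.Nonempty) (hPV : P ⊆ V) (hc : W.card + V.card = n + 1) (x : ℕ) :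
    x ∈ lcup U W P ↔ (1 ≤ x ∧ x ≤ n) ∧ iinv V (x + 1 - W.card) ∈ P := by
  have hw := Finset.card_pos.2 hW
  have hv := Finset.card_pos.2 (hP.mono hPV)
  have key : x ∈ P.image (fun b => iord V b + W.card - 1) ↔
      (W.card ≤ x ∧ x ≤ n) ∧ iinv V (x + 1 - W.card) ∈ P := by
    simp only [Finset.mem_image]
    constructor
    · rintro ⟨b, hb, rfl⟩
      obtain ⟨h1, h2, h3⟩ := iord_spec V b (hPV hb)
      refine ⟨by omega, ?_⟩
      rw [show iord V b + W.card - 1 + 1 - W.card = iord V b by omega, h3]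
      exact hb
    · rintro ⟨hx, h⟩
      refine ⟨_, h, ?_⟩
      rw [(iinv_spec V (x + 1 - W.card) (by omega) (by omega)).2]
      omega
  have low : x ≤ W.card → iinv V (x + 1 - W.card) = iinv V 1 := by
    intro h
    rcases Nat.lt_or_ge x W.card with h' | h'
    · rw [show x + 1 - W.card = 0 by omega, iinv_zero]
    · rw [show x + 1 - W.card = 1 by omega]
  unfold lcup
  rw [hV, if_neg (by rw [not_or]; exact ⟨hW.ne_empty, hP.ne_empty⟩)]
  split_ifs with h <;> rw [fmin_iff V P hP hPV] at h
  · rw [Finset.mem_union, key, Finset.mem_Icc]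
    constructor
    · rintro (⟨h1, h2⟩ | h1)
      · exact ⟨by omega, h2⟩
      · exact ⟨by omega, by rw [low h1.2]; exact h⟩
    · rintro ⟨h1, h2⟩
      rcases Nat.lt_or_ge x W.card with h' | h'
      · right; omega
      · left; exact ⟨by omega, h2⟩
  · rw [key]
    constructor
    · rintro ⟨h1, h2⟩; exact ⟨by omega, h2⟩
    · rintro ⟨h1, h2⟩
      refine ⟨⟨?_, h1.2⟩, h2⟩
      by_contra h'
      rw [low (by omega)] at h2
      exact h h2

lemma mem_ucup (n : ℕ) (U W P V : Finset ℕ) (hV : U \ W = V) (hW : W.Nonempty)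
    (hP : P.Nonempty) (hPV : P ⊆ V) (hc : W.card + V.card = n + 1) (hU : U.card = n + 1)
    (x : ℕ) :
    x ∈ ucup U P W ↔ (1 ≤ x ∧ x ≤ n) ∧ iinv V (min x V.card) ∈ P := by
  have hw := Finset.card_pos.2 hW
  have hv := Finset.card_pos.2 (hP.mono hPV)
  have key : x ∈ P.image (iord V) ↔
      (1 ≤ x ∧ x ≤ V.card) ∧ iinv V (min x V.card) ∈ P := by
    simp only [Finset.mem_image]
    constructor
    · rintro ⟨b, hb, rfl⟩
      obtain ⟨h1, h2, h3⟩ := iord_spec V b (hPV hb)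
      refine ⟨by omega, ?_⟩
      rw [min_eq_left h2, h3]
      exact hb
    · rintro ⟨hx, h⟩
      refine ⟨_, h, ?_⟩
      rw [(iinv_spec V (min x V.card) (by omega) (by omega)).2]
      omega
  unfold ucup
  rw [hV, if_neg (by rw [not_or]; exact ⟨hP.ne_empty, hW.ne_empty⟩)]
  split_ifs with h <;> rw [fmax_iff V P hP hPV] at h
  · rw [Finset.mem_union, key, Finset.mem_Icc]
    constructor
    · rintro (⟨h1, h2⟩ | h1)
      · exact ⟨by omega, h2⟩
      · exact ⟨by omega, by rw [min_eq_right (by omega)]; exact h⟩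
    · rintro ⟨h1, h2⟩
      rcases Nat.lt_or_ge V.card x with h' | h'
      · right; omega
      · left; exact ⟨by omega, h2⟩
  · rw [key]
    constructor
    · rintro ⟨h1, h2⟩; exact ⟨by omega, h2⟩
    · rintro ⟨h1, h2⟩
      refine ⟨⟨h1.1, ?_⟩, h2⟩
      by_contra h'
      rw [min_eq_right (by omega)] at h2
      exact h h2

lemma part2_of (n : ℕ) (f : ℕ → ℕ) (P Q C D : Finset ℕ) (hPQ : Disjoint P Q)
    (hf : ∀ x, 1 ≤ x → x ≤ n → f x ∈ P ∪ Q)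
    (hs : ∀ b ∈ P ∪ Q, ∃ x, (1 ≤ x ∧ x ≤ n) ∧ f x = b)
    (hP : P.Nonempty) (hQ : Q.Nonempty)
    (hC : ∀ x, x ∈ C ↔ (1 ≤ x ∧ x ≤ n) ∧ f x ∈ P)
    (hD : ∀ x, x ∈ D ↔ (1 ≤ x ∧ x ≤ n) ∧ f x ∈ Q) : IsPart2 n C D := by
  refine ⟨?_, ?_, ?_, ?_⟩
  · obtain ⟨b, hb⟩ := hP
    obtain ⟨x, hx, rfl⟩ := hs b (Finset.mem_union_left _ hb)
    exact Finset.ne_empty_of_mem ((hC x).2 ⟨hx, hb⟩)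
  · obtain ⟨b, hb⟩ := hQ
    obtain ⟨x, hx, rfl⟩ := hs b (Finset.mem_union_right _ hb)
    exact Finset.ne_empty_of_mem ((hD x).2 ⟨hx, hb⟩)
  · rw [Finset.disjoint_left]
    intro x h1 h2
    exact Finset.disjoint_left.1 hPQ ((hC x).1 h1).2 ((hD x).1 h2).2
  · ext x
    rw [Finset.mem_union, hC, hD, Finset.mem_Icc, ← and_or_left, ← Finset.mem_union]
    exact ⟨fun h => h.1, fun h => ⟨h, hf x h.1 h.2⟩⟩

lemma lower_image (n : ℕ) (W V T C : Finset ℕ) (hT : T ⊆ V) (hw : 1 ≤ W.card)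
    (hc : W.card + V.card = n + 1)
    (hC : ∀ x, x ∈ C ↔ (1 ≤ x ∧ x ≤ n) ∧ iinv V (x + 1 - W.card) ∈ T) :
    (Finset.Icc (n - V.card + 1) n ∩ C).image (fun x => iinv V (x + 1 - W.card)) = T := by
  ext b
  simp only [Finset.mem_image, Finset.mem_inter, Finset.mem_Icc, hC]
  constructor
  · rintro ⟨x, ⟨-, -, h⟩, rfl⟩; exact h
  · intro hb
    obtain ⟨h1, h2, h3⟩ := iord_spec V b (hT hb)
    have e : iord V b + W.card - 1 + 1 - W.card = iord V b := by omega
    refine ⟨iord V b + W.card - 1, ⟨by omega, by omega, ?_⟩, ?_⟩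
    · rw [e, h3]; exact hb
    · rw [e, h3]

lemma upper_image (n : ℕ) (W V T C : Finset ℕ) (hT : T ⊆ V) (hw : 1 ≤ W.card)
    (hc : W.card + V.card = n + 1)
    (hC : ∀ x, x ∈ C ↔ (1 ≤ x ∧ x ≤ n) ∧ iinv V (min x V.card) ∈ T) :
    (Finset.Icc 1 V.card ∩ C).image (iinv V) = T := by
  ext b
  simp only [Finset.mem_image, Finset.mem_inter, Finset.mem_Icc, hC]
  constructor
  · rintro ⟨x, ⟨h1, -, h⟩, rfl⟩
    rwa [min_eq_left h1.2] at h
  · intro hb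
    obtain ⟨h1, h2, h3⟩ := iord_spec V b (hT hb)
    refine ⟨iord V b, ⟨by omega, by omega, ?_⟩, h3⟩
    rw [min_eq_left h2, h3]; exact hb

lemma lower (n : ℕ) (U W P Q : Finset ℕ) (hV : U \ W = P ∪ Q) (hW : W.Nonempty)
    (hP : P.Nonempty) (hQ : Q.Nonempty) (hPQ : Disjoint P Q)
    (hc : W.card + (P ∪ Q).card = n + 1) :
    memQr1 W.card n (lcup U W P) (lcup U W Q) ∧
    (Finset.Icc (n - (P ∪ Q).card + 1) n ∩ lcup U W P).image
      (fun x => iinv (P ∪ Q) (x + 1 - W.card)) = P ∧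
    (Finset.Icc (n - (P ∪ Q).card + 1) n ∩ lcup U W Q).image
      (fun x => iinv (P ∪ Q) (x + 1 - W.card)) = Q := by
  have hPV : P ⊆ P ∪ Q := Finset.subset_union_left
  have hQV : Q ⊆ P ∪ Q := Finset.subset_union_right
  have hC := mem_lcup n U W P _ hV hW hP hPV hc
  have hD := mem_lcup n U W Q _ hV hW hQ hQV hc
  have hw := Finset.card_pos.2 hW
  have hv := Finset.card_pos.2 (hP.mono hPV)
  have low : ∀ x, x ≤ W.card → iinv (P ∪ Q) (x + 1 - W.card) = iinv (P ∪ Q) 1 := by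
    intro x h
    rcases Nat.lt_or_ge x W.card with h' | h'
    · rw [show x + 1 - W.card = 0 by omega, iinv_zero]
    · rw [show x + 1 - W.card = 1 by omega]
  have m1 := (iinv_spec (P ∪ Q) 1 le_rfl hv).1
  refine ⟨⟨part2_of n _ P Q _ _ hPQ ?_ ?_ hP hQ hC hD, ?_⟩,
    lower_image n W _ P _ hPV hw hc hC, lower_image n W _ Q _ hQV hw hc hD⟩
  · intro x h1 h2
    rcases Nat.lt_or_ge x W.card with h' | h'
    · rw [low x h'.le]; exact m1
    · exact (iinv_spec _ _ (by omega) (by omega)).1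
  · intro b hb
    obtain ⟨h1, h2, h3⟩ := iord_spec _ b hb
    refine ⟨iord (P ∪ Q) b + W.card - 1, by omega, ?_⟩
    rw [show iord (P ∪ Q) b + W.card - 1 + 1 - W.card = iord (P ∪ Q) b by omega, h3]
  · refine (Finset.mem_union.1 m1).imp (fun h x hx => ?_) (fun h x hx => ?_)
    · rw [Finset.mem_Icc] at hx
      exact (hC x).2 ⟨by omega, by rw [low x hx.2]; exact h⟩
    · rw [Finset.mem_Icc] at hx
      exact (hD x).2 ⟨by omega, by rw [low x hx.2]; exact h⟩

lemma upper (n : ℕ) (U W P Q : Finset ℕ) (hV : U \ W = P ∪ Q) (hW : W.Nonempty)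
    (hP : P.Nonempty) (hQ : Q.Nonempty) (hPQ : Disjoint P Q)
    (hc : W.card + (P ∪ Q).card = n + 1) (hU : U.card = n + 1) :
    memQ1s W.card n (ucup U P W) (ucup U Q W) ∧
    (Finset.Icc 1 (P ∪ Q).card ∩ ucup U P W).image (iinv (P ∪ Q)) = P ∧
    (Finset.Icc 1 (P ∪ Q).card ∩ ucup U Q W).image (iinv (P ∪ Q)) = Q := by
  have hPV : P ⊆ P ∪ Q := Finset.subset_union_left
  have hQV : Q ⊆ P ∪ Q := Finset.subset_union_right
  have hC := mem_ucup n U W P _ hV hW hP hPV hc hU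
  have hD := mem_ucup n U W Q _ hV hW hQ hQV hc hU
  have hw := Finset.card_pos.2 hW
  have hv := Finset.card_pos.2 (hP.mono hPV)
  have m1 := (iinv_spec (P ∪ Q) (P ∪ Q).card hv le_rfl).1
  refine ⟨⟨part2_of n _ P Q _ _ hPQ ?_ ?_ hP hQ hC hD, ?_⟩,
    upper_image n W _ P _ hPV hw hc hC, upper_image n W _ Q _ hQV hw hc hD⟩
  · intro x h1 h2
    exact (iinv_spec _ _ (by omega) (by omega)).1
  · intro b hb
    obtain ⟨h1, h2, h3⟩ := iord_spec _ b hb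
    refine ⟨iord (P ∪ Q) b, by omega, ?_⟩
    rw [min_eq_left h2, h3]
  · refine (Finset.mem_union.1 m1).imp (fun h x hx => ?_) (fun h x hx => ?_)
    · rw [Finset.mem_Icc] at hx
      exact (hC x).2 ⟨by omega, by rw [min_eq_right (by omega)]; exact h⟩
    · rw [Finset.mem_Icc] at hx
      exact (hD x).2 ⟨by omega, by rw [min_eq_right (by omega)]; exact h⟩

lemma box_cases (n : ℕ) (W P Q : Finset ℕ) (hW : W.Nonempty) (hP : P.Nonempty)
    (hWP : Disjoint W (P ∪ Q)) (hU : W ∪ (P ∪ Q) = Finset.Icc 1 (n+1)) :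
    Finset.Icc 1 (n+1) \ W = P ∪ Q ∧ W.card + (P ∪ Q).card = n + 1 ∧
    (((n+1) ∈ W ∧ fmax W = fmax (Finset.Icc 1 (n+1))) ∨
     ((n+1) ∈ P ∪ Q ∧ ¬ fmax W = fmax (Finset.Icc 1 (n+1)))) := by
  refine ⟨?_, ?_, ?_⟩
  · rw [← hU, Finset.union_sdiff_cancel_left hWP]
  · rw [← Finset.card_union_of_disjoint hWP, hU]; simp
  · have hm : n + 1 ∈ W ∪ (P ∪ Q) := by rw [hU]; simp
    have hle : ∀ b ∈ Finset.Icc 1 (n+1), b ≤ n + 1 := fun b hb => (Finset.mem_Icc.1 hb).2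
    obtain ⟨u1, u2⟩ := fmax_spec (Finset.Icc 1 (n+1)) ⟨1, by simp⟩
    have e : fmax (Finset.Icc 1 (n+1)) = n + 1 := le_antisymm (hle _ u1) (u2 _ (by simp))
    obtain ⟨w1, w2⟩ := fmax_spec W hW
    rw [e]
    rcases Finset.mem_union.1 hm with h | h
    · refine Or.inl ⟨h, le_antisymm (hle _ ?_) (w2 _ h)⟩
      rw [← hU]; exact Finset.mem_union_left _ w1
    · refine Or.inr ⟨h, fun h' => ?_⟩
      rw [h'] at w1
      exact Finset.disjoint_left.1 hWP w1 h

lemma remEmpty_three (X Y Z : Finset ℕ) (hX : X ≠ ∅) (hY : Y ≠ ∅) (hZ : Z ≠ ∅) :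
    [X, Y, Z] = remEmpty [X, Y, Z] := by
  simp [remEmpty, hX, hY, hZ]

/-- For every partition `X|Y|Z` of `{1,…,n+1}` into three nonempty
sets, the bracket identities `[X|Y∪Z ; X□(Y|Z)] = X|Y|Z` and
`[X∪Y|Z ; (X|Y)□Z] = X|Y|Z` hold; in particular in each case `C|D` lies in the
appropriate class `Q` so that the bracket is defined. -/
theorem statement15 (n : ℕ) (hn : 2 ≤ n) (X Y Z : Finset ℕ)
    (hX : X ≠ ∅) (hY : Y ≠ ∅) (hZ : Z ≠ ∅)
    (hXY : Disjoint X Y) (hXZ : Disjoint X Z) (hYZ : Disjoint Y Z)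
    (hU : X ∪ Y ∪ Z = Finset.Icc 1 (n+1)) :
    bracketRel n X (Y ∪ Z)
        ((box (Finset.Icc 1 (n+1)) X [Y, Z]).getD 0 ∅)
        ((box (Finset.Icc 1 (n+1)) X [Y, Z]).getD 1 ∅) [X, Y, Z] ∧
    bracketRel n (X ∪ Y) Z
        ((box (Finset.Icc 1 (n+1)) Z [X, Y]).getD 0 ∅)
        ((box (Finset.Icc 1 (n+1)) Z [X, Y]).getD 1 ∅) [X, Y, Z] := by
  have nX := Finset.nonempty_iff_ne_empty.2 hX
  have nY := Finset.nonempty_iff_ne_empty.2 hY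
  have nZ := Finset.nonempty_iff_ne_empty.2 hZ
  have hUc : (Finset.Icc 1 (n+1)).card = n + 1 := by simp
  constructor
  · obtain ⟨hV, hc, h⟩ := box_cases n X Y Z nX nY
      (Finset.disjoint_union_right.2 ⟨hXY, hXZ⟩) (by rw [← hU, Finset.union_assoc])
    rcases h with ⟨h1, h2⟩ | ⟨h1, h2⟩
    · obtain ⟨q, e1, e2⟩ := upper n _ X Y Z hV nX nY nZ hYZ hc hUc
      simp only [box, if_pos h2, List.map_cons, List.map_nil, List.getD_cons_zero,
        List.getD_cons_succ]
      refine Or.inr (Or.inr (Or.inl ⟨h1, q, ?_⟩))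
      rw [e1, e2]
      exact remEmpty_three X Y Z hX hY hZ
    · obtain ⟨q, e1, e2⟩ := lower n _ X Y Z hV nX nY nZ hYZ hc
      simp only [box, if_neg h2, List.map_cons, List.map_nil, List.getD_cons_zero,
        List.getD_cons_succ]
      refine Or.inl ⟨h1, q, ?_⟩
      rw [e1, e2]
      exact remEmpty_three X Y Z hX hY hZ
  · obtain ⟨hV, hc, h⟩ := box_cases n Z X Y nZ nX
      (Finset.disjoint_union_right.2 ⟨hXZ.symm, hYZ.symm⟩) (by rw [← hU, Finset.union_comm])
    rcases h with ⟨h1, h2⟩ | ⟨h1, h2⟩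
    · obtain ⟨q, e1, e2⟩ := upper n _ Z X Y hV nZ nX nY hXY hc hUc
      simp only [box, if_pos h2, List.map_cons, List.map_nil, List.getD_cons_zero,
        List.getD_cons_succ]
      refine Or.inr (Or.inl ⟨h1, q, ?_⟩)
      rw [e1, e2]
      exact remEmpty_three X Y Z hX hY hZ
    · obtain ⟨q, e1, e2⟩ := lower n _ Z X Y hV nZ nX nY hXY hc
      simp only [box, if_neg h2, List.map_cons, List.map_nil, List.getD_cons_zero,
        List.getD_cons_succ]
      refine Or.inr (Or.inr (Or.inr ⟨h1, q, ?_⟩))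
      rw [e1, e2]
      exact remEmpty_three X Y Z hX hY hZ

end SU
end

section
/- Let R be a commutative ring with unity, A a ℤ-graded R-module, and for each k ≥ 1 let ψ^k : A → A^{⊗k} be a homogeneous map of degree k − 2. If (A, ψ^n)_{n≥1} is an A_∞-coalgebra, i.e. the derivation-type map d on ⊕_{n≥1}(↓A)^{⊗n} defined by d = Σ_{n,k≥1} Σ_{i=0}^{n−1} (−1)^{⌊n/2⌋ + i(k+1) + k(n+1)} ↓^{⊗(n+k−1)} ∘ ψ^k_{i,n−1−i} ∘ ↑^{⊗n} satisfies d² = 0, then for every n ≥ 1 the quadratic relations Σ_{ℓ=0}^{n−1} Σ_{i=0}^{n−ℓ−1} (−1)^{ℓ(n+i+1)} ψ^{ℓ+1}_{i,n−ℓ−1−i} ∘ ψ^{n−ℓ} = 0 hold as maps A → A^{⊗n}. -/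
open TensorProduct

namespace SU19

universe u
variable (R : Type u) [CommRing R] (A : ℤ → Type u)
  [∀ i, AddCommGroup (A i)] [∀ i, Module R (A i)]

/-- iterated tensor product of graded pieces of `A` along a list of degrees. -/
noncomputable def Tc : List ℤ → ModuleCat.{u} R
  | [] => ModuleCat.of R R
  | d :: l => ModuleCat.of R (A d ⊗[R] (Tc l))

abbrev Tm (l : List ℤ) : Type u := (Tc R A l : Type u)

noncomputable def tsplit :
    (l₁ l₂ : List ℤ) → (Tm R A (l₁ ++ l₂) ≃ₗ[R] (Tm R A l₁ ⊗[R] Tm R A l₂))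
  | [], l₂ => (TensorProduct.lid R (Tm R A l₂)).symm
  | d :: l₁, l₂ =>
      (TensorProduct.congr (LinearEquiv.refl R (A d)) (tsplit l₁ l₂)).trans
        (TensorProduct.assoc R (A d) (Tm R A l₁) (Tm R A l₂)).symm

noncomputable def lcast {l₁ l₂ : List ℤ} (h : l₁ = l₂) : Tm R A l₁ ≃ₗ[R] Tm R A l₂ := by
  subst h; exact LinearEquiv.refl R _

def sgnz (z : ℤ) : ℤ := if Even z then 1 else -1

/-- Koszul exponent for applying a tensor power of maps of degree `±1` to a component
with degree list `l`: `Σ_j (m−1−j)·l_j`. -/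
def kexp (l : List ℤ) : ℤ :=
  ∑ j ∈ Finset.range l.length, ((l.length - 1 - j : ℕ) : ℤ) * l.getD j 0

lemma mapshift (l : List ℤ) : (l.map (fun e => e - 1)).map (fun e => e + 1) = l := by
  induction l with
  | nil => simp
  | cons a l ih => simp [ih]

lemma list_split_at (ds : List ℤ) (i : ℕ) (h : i < ds.length) :
    ds = ds.take i ++ ds.getD i 0 :: ds.drop (i + 1) := by
  conv_lhs => rw [← List.take_append_drop i ds]
  congr 1
  rw [List.drop_eq_getElem_cons h, List.getD_eq_getElem ds 0 h]

/-- `1^{⊗i} ⊗ ψ^k ⊗ 1^{⊗(n−1−i)}` (without the Koszul sign, which is a scalar on each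
component and is applied separately), with values in `⊕_l T(l)`;  the component of the
direct sum indexed by `l` is placed at the full list `take i ++ l ++ drop (i+1)`. -/
noncomputable def extPsi (ψk : (a : ℤ) → A a →ₗ[R] DirectSum (List ℤ) (fun l => Tm R A l))
    (ds : List ℤ) (i : ℕ) :
    Tm R A ds →ₗ[R] DirectSum (List ℤ) (fun l => Tm R A l) :=
  if h : i < ds.length then
    (DirectSum.toModule R (List ℤ) (DirectSum (List ℤ) (fun l => Tm R A l)) (fun l =>
        (DirectSum.lof R (List ℤ) (fun l' => Tm R A l')
            (ds.take i ++ (l ++ ds.drop (i + 1)))) ∘ₗ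
          (tsplit R A (ds.take i) (l ++ ds.drop (i + 1))).symm.toLinearMap ∘ₗ
          (TensorProduct.congr (LinearEquiv.refl R (Tm R A (ds.take i)))
              (tsplit R A l (ds.drop (i + 1))).symm).toLinearMap)) ∘ₗ
      (TensorProduct.directSumRight R R (Tm R A (ds.take i))
          (fun l => Tm R A l ⊗[R] Tm R A (ds.drop (i + 1)))).toLinearMap ∘ₗ
      (TensorProduct.congr (LinearEquiv.refl R (Tm R A (ds.take i)))
          (TensorProduct.directSumLeft R R (fun l => Tm R A l)
            (Tm R A (ds.drop (i + 1))))).toLinearMap ∘ₗ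
      (TensorProduct.map LinearMap.id
          (TensorProduct.map (ψk (ds.getD i 0)) LinearMap.id)) ∘ₗ
      (tsplit R A (ds.take i) (ds.getD i 0 :: ds.drop (i + 1))).toLinearMap ∘ₗ
      (lcast R A (list_split_at ds i h)).toLinearMap
  else 0

/-- `⊕_{n≥1} (↓A)^{⊗n}`: direct sum over nonempty lists of desuspended degrees, the
component of ↓-degree list `es` being `T(es + 1)`. -/
abbrev Bar : Type u :=
  DirectSum {l : List ℤ // l ≠ []} (fun l => Tm R A (l.val.map (fun e => e + 1)))

/-- pushing `⊕_l T(l)` (indexed by `A`-degree lists) into the bar construction,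
together with the Koszul sign of `↓^{⊗m}` on each component. -/
noncomputable def pushDown : DirectSum (List ℤ) (fun l => Tm R A l) →ₗ[R] Bar R A :=
  DirectSum.toModule R (List ℤ) (Bar R A) (fun l =>
    if h : l.map (fun e => e - 1) ≠ [] then
      sgnz (kexp l) •
        ((DirectSum.lof R {l' : List ℤ // l' ≠ []}
            (fun l' => Tm R A (l'.val.map (fun e => e + 1)))
            ⟨l.map (fun e => e - 1), h⟩) ∘ₗ
          (lcast R A (mapshift l).symm).toLinearMap)
    else 0)

/-- the part `Σ_{n≥1} Σ_{i=0}^{n−1} (−1)^{⌊n/2⌋+i(k+1)+k(n+1)} ↓^{⊗(n+k−1)} ∘ ψ^k_{i,n−1−i} ∘ ↑^{⊗n}`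
of the tilde-cobar differential `d` using `ψ^k` (all Koszul signs of `↑^{⊗n}`,
`↓^{⊗(n+k−1)}` and `ψ^k_{i,j}` are scalars on components and are included). -/
noncomputable def cobarD (k : ℕ)
    (ψ : (k : ℕ) → (a : ℤ) → A a →ₗ[R] DirectSum (List ℤ) (fun l => Tm R A l)) :
    Bar R A →ₗ[R] Bar R A :=
  DirectSum.toModule R _ _ (fun es =>
    ∑ i ∈ Finset.range es.val.length,
      ((-1 : ℤ) ^ (es.val.length / 2 + i * (k + 1) + k * (es.val.length + 1)) *
          sgnz (kexp es.val) *
          sgnz (((k : ℤ) - 2) * (((es.val.map (fun e => e + 1))).take i).sum)) •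
        ((pushDown R A) ∘ₗ (extPsi R A (ψ k) (es.val.map (fun e => e + 1)) i)))

/-- the signed extension `ψ^k_{i,·}` as an endomorphism of `⊕_l T(l)`, including the
Koszul sign of `1^{⊗i} ⊗ ψ^k ⊗ 1^{⊗(n−1−i)}`. -/
noncomputable def extPsiTotal (k i : ℕ)
    (ψ : (k : ℕ) → (a : ℤ) → A a →ₗ[R] DirectSum (List ℤ) (fun l => Tm R A l)) :
    DirectSum (List ℤ) (fun l => Tm R A l) →ₗ[R] DirectSum (List ℤ) (fun l => Tm R A l) :=
  DirectSum.toModule R (List ℤ) _ (fun l =>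
    sgnz (((k : ℤ) - 2) * ((l.take i).sum)) • extPsi R A (ψ k) l i)

end SU19
namespace SU19

universe u

section helpers

variable {R : Type u} [CommRing R] {A : ℤ → Type u}
  [∀ i, AddCommGroup (A i)] [∀ i, Module R (A i)]

lemma lof_lcast {l₁ l₂ : List ℤ} (h : l₁ = l₂) (y : Tm R A l₁) :
    DirectSum.lof R (List ℤ) (fun l => Tm R A l) l₂ (lcast R A h y) =
      DirectSum.lof R (List ℤ) (fun l => Tm R A l) l₁ y := by
  subst h; rfl

lemma extPsi_lcast (ψk : (a : ℤ) → A a →ₗ[R] DirectSum (List ℤ) (fun l => Tm R A l))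
    {l₁ l₂ : List ℤ} (h : l₁ = l₂) (i : ℕ) (y : Tm R A l₁) :
    extPsi R A ψk l₂ i (lcast R A h y) = extPsi R A ψk l₁ i y := by
  subst h; rfl

lemma lcast_cons (d : ℤ) {l₁ l₂ : List ℤ} (h : l₁ = l₂) (h' : d :: l₁ = d :: l₂)
    (x : A d) (y : Tm R A l₁) :
    lcast R A h' ((x ⊗ₜ[R] y : A d ⊗[R] Tm R A l₁) : Tm R A (d :: l₁)) =
      ((x ⊗ₜ[R] (lcast R A h y) : A d ⊗[R] Tm R A l₂) : Tm R A (d :: l₂)) := by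
  subst h; rfl

lemma tsplit_nil_right (l : List ℤ) (y : Tm R A l) :
    (tsplit R A l []) (lcast R A (List.append_nil l).symm y) =
      y ⊗ₜ[R] ((1 : R) : Tm R A []) := by
  induction l with
  | nil =>
    change (1 : R) ⊗ₜ[R] (y : R) = (y : R) ⊗ₜ[R] (1 : R)
    change R at y
    have h : ∀ r : R, (1 : R) ⊗ₜ[R] r = r ⊗ₜ[R] (1 : R) := by
      intro r
      calc (1 : R) ⊗ₜ[R] r = (1 : R) ⊗ₜ[R] (r • (1 : R)) := by simp
        _ = (r • (1 : R)) ⊗ₜ[R] (1 : R) := by rw [TensorProduct.smul_tmul]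
        _ = r ⊗ₜ[R] (1 : R) := by simp
    exact h y
  | cons d l ih =>
    change A d ⊗[R] Tm R A l at y
    induction y using TensorProduct.induction_on with
    | zero => erw [map_zero, map_zero, TensorProduct.zero_tmul]; rfl
    | add a b ha hb => erw [map_add, map_add, TensorProduct.add_tmul, ha, hb]; rfl
    | tmul x y =>
      erw [lcast_cons d (List.append_nil l).symm]
      change (TensorProduct.assoc R (A d) (Tm R A l) (Tm R A [])).symm
        (x ⊗ₜ[R] (tsplit R A l []) (lcast R A (List.append_nil l).symm y)) = _
      rw [ih]
      rfl

/-- The pure tensor `x ⊗ y` in `T(d :: l)`. -/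
noncomputable def tcons {d : ℤ} {l : List ℤ} (x : A d) (y : Tm R A l) : Tm R A (d :: l) :=
  (x ⊗ₜ[R] y : A d ⊗[R] Tm R A l)

/-- The unit of `T([])`. -/
noncomputable def tone : Tm R A [] := (1 : R)

/-- The main part of `extPsi`. -/
noncomputable def extCore
    (ψk : (a : ℤ) → A a →ₗ[R] DirectSum (List ℤ) (fun l => Tm R A l))
    (l₁ l₂ : List ℤ) (a : ℤ) :
    Tm R A l₁ ⊗[R] Tm R A (a :: l₂) →ₗ[R] DirectSum (List ℤ) (fun l => Tm R A l) :=
    (DirectSum.toModule R (List ℤ) (DirectSum (List ℤ) (fun l => Tm R A l)) (fun l =>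
        (DirectSum.lof R (List ℤ) (fun l' => Tm R A l')
            (l₁ ++ (l ++ l₂))) ∘ₗ
          (tsplit R A l₁ (l ++ l₂)).symm.toLinearMap ∘ₗ
          (TensorProduct.congr (LinearEquiv.refl R (Tm R A l₁))
              (tsplit R A l l₂).symm).toLinearMap)) ∘ₗ
      (TensorProduct.directSumRight R R (Tm R A l₁)
          (fun l => Tm R A l ⊗[R] Tm R A l₂)).toLinearMap ∘ₗ
      (TensorProduct.congr (LinearEquiv.refl R (Tm R A l₁))
          (TensorProduct.directSumLeft R R (fun l => Tm R A l)
            (Tm R A l₂))).toLinearMap ∘ₗ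
      (TensorProduct.map LinearMap.id
          (TensorProduct.map (ψk a) LinearMap.id))

lemma extPsi_eq (ψk : (a : ℤ) → A a →ₗ[R] DirectSum (List ℤ) (fun l => Tm R A l))
    (ds : List ℤ) (i : ℕ) (h : i < ds.length) (y : Tm R A ds) :
    extPsi R A ψk ds i y = extCore ψk (ds.take i) (ds.drop (i + 1)) (ds.getD i 0)
      (tsplit R A (ds.take i) (ds.getD i 0 :: ds.drop (i + 1))
        (lcast R A (list_split_at ds i h) y)) := by
  rw [extPsi, dif_pos h]
  rfl

lemma extCore_tmul (ψk : (a : ℤ) → A a →ₗ[R] DirectSum (List ℤ) (fun l => Tm R A l))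
    (l₁ l₂ : List ℤ) (a : ℤ) (u : Tm R A l₁) (x : A a) (v : Tm R A l₂) :
    extCore ψk l₁ l₂ a (u ⊗ₜ[R] tcons x v) =
    DirectSum.toModule R (List ℤ) (DirectSum (List ℤ) (fun l => Tm R A l)) (fun l =>
        (DirectSum.lof R (List ℤ) (fun l' => Tm R A l') (l₁ ++ (l ++ l₂))) ∘ₗ
          (tsplit R A l₁ (l ++ l₂)).symm.toLinearMap ∘ₗ
          (TensorProduct.mk R _ _ u) ∘ₗ (tsplit R A l l₂).symm.toLinearMap ∘ₗ
            (TensorProduct.mk R _ _).flip v) (ψk _ x) := by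
  change (DirectSum.toModule R (List ℤ) (DirectSum (List ℤ) (fun l => Tm R A l)) (fun l =>
        (DirectSum.lof R (List ℤ) (fun l' => Tm R A l')
            (l₁ ++ (l ++ l₂))) ∘ₗ
          (tsplit R A l₁ (l ++ l₂)).symm.toLinearMap ∘ₗ
          (TensorProduct.congr (LinearEquiv.refl R (Tm R A l₁))
              (tsplit R A l l₂).symm).toLinearMap))
      (TensorProduct.directSumRight R R (Tm R A l₁)
          (fun l => Tm R A l ⊗[R] Tm R A l₂)
      (TensorProduct.congr (LinearEquiv.refl R (Tm R A l₁))
          (TensorProduct.directSumLeft R R (fun l => Tm R A l)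
            (Tm R A l₂)) (u ⊗ₜ[R] (ψk a x ⊗ₜ[R] v)))) = _
  generalize ψk a x = z
  induction z using DirectSum.induction_on with
  | zero => simp
  | add a b ha hb =>
    simp only [TensorProduct.add_tmul, TensorProduct.tmul_add, map_add, ha, hb]
  | of l y =>
    rw [← DirectSum.lof_eq_of R]
    simp only [TensorProduct.congr_tmul, LinearEquiv.refl_apply,
      TensorProduct.directSumLeft_tmul_lof, TensorProduct.directSumRight_tmul_lof,
      DirectSum.toModule_lof, LinearMap.comp_apply, LinearEquiv.coe_coe]
    rfl

lemma extPsi_single (ψk : (a : ℤ) → A a →ₗ[R] DirectSum (List ℤ) (fun l => Tm R A l))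
    (a : ℤ) (x : A a) :
    extPsi R A ψk [a] 0 (tcons x tone) = ψk a x := by
  rw [extPsi_eq ψk [a] 0 (by simp)]
  have e : extCore ψk ([a].take 0) ([a].drop (0 + 1)) ([a].getD 0 0)
      (tsplit R A ([a].take 0) ([a].getD 0 0 :: [a].drop (0 + 1))
        (lcast R A (list_split_at [a] 0 (by simp)) (tcons x tone))) =
      extCore ψk [] [] a (tone ⊗ₜ[R] tcons x tone) := rfl
  rw [e, extCore_tmul]
  generalize ψk a x = z
  induction z using DirectSum.induction_on with
  | zero => simp
  | add a b ha hb => simp only [map_add, ha, hb]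
  | of l y =>
    rw [← DirectSum.lof_eq_of R, DirectSum.toModule_lof, ← lof_lcast (List.append_nil l).symm y]
    have h := tsplit_nil_right (R := R) (A := A) l y
    change _ = y ⊗ₜ[R] tone at h
    rw [← LinearEquiv.eq_symm_apply] at h
    rw [h]
    change DirectSum.lof R (List ℤ) (fun l => Tm R A l) (l ++ [])
      ((TensorProduct.lid R (Tm R A (l ++ []))) ((1 : R) ⊗ₜ[R] _)) = _
    rw [TensorProduct.lid_tmul, one_smul]
    rfl

lemma sgnz_eq (z : ℤ) : sgnz z = if Even z then 1 else -1 := rfl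

lemma sgnz_add (a b : ℤ) : sgnz (a + b) = sgnz a * sgnz b := by
  unfold sgnz
  by_cases ha : Even a <;> by_cases hb : Even b <;> simp [Int.even_add, ha, hb]

lemma sgnz_mul_self (a : ℤ) : sgnz a * sgnz a = 1 := by
  unfold sgnz; split <;> simp

lemma sgnz_nat (m : ℕ) : sgnz (m : ℤ) = (-1) ^ m := by
  unfold sgnz
  by_cases h : Even m
  · simp [h]
  · rw [if_neg (by exact_mod_cast h), (Nat.not_even_iff_odd.mp h).neg_one_pow]

lemma kexp_cons (a : ℤ) (l : List ℤ) : kexp (a :: l) = l.length * a + kexp l := by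
  unfold kexp
  rw [List.length_cons, Finset.sum_range_succ']
  simp only [List.getD_cons_succ, List.getD_cons_zero]
  rw [add_comm]
  have h0 : (((l.length + 1 - 1 - 0 : ℕ)) : ℤ) = l.length := by simp
  rw [h0]
  congr 1
  · apply Finset.sum_congr rfl
    intro j _
    congr 2
    omega

lemma kexp_shift (l : List ℤ) :
    sgnz (kexp l) * sgnz (kexp (l.map (fun e => e - 1))) = (-1) ^ (l.length / 2) := by
  have key : ∃ t : ℤ, kexp l = kexp (l.map (fun e => e - 1)) + (l.length / 2 : ℕ) + 2 * t := by
    induction l with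
    | nil => exact ⟨0, by simp [kexp]⟩
    | cons a l ih =>
      obtain ⟨t, ht⟩ := ih
      rw [List.map_cons, kexp_cons, kexp_cons, ht, List.length_map, List.length_cons]
      rcases Nat.even_or_odd' l.length with ⟨c, hc | hc⟩
      · refine ⟨t + c, ?_⟩
        have h1 : l.length / 2 = c := by omega
        have h2 : (l.length + 1) / 2 = c := by omega
        rw [h1, h2, hc]; push_cast; ring
      · refine ⟨t + c, ?_⟩
        have h1 : l.length / 2 = c := by omega
        have h2 : (l.length + 1) / 2 = c + 1 := by omega
        rw [h1, h2, hc]; push_cast; ring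
  obtain ⟨t, ht⟩ := key
  have h2 : sgnz (2 * t) = 1 := by simp [sgnz]
  rw [ht, sgnz_add, sgnz_add, h2, sgnz_nat, mul_one, mul_right_comm, sgnz_mul_self, one_mul]

lemma pushDown_lof (l : List ℤ) (hl : l.map (fun e => e - 1) ≠ []) (y : Tm R A l) :
    pushDown R A (DirectSum.lof R (List ℤ) (fun l => Tm R A l) l y) =
      sgnz (kexp l) • DirectSum.lof R {l' : List ℤ // l' ≠ []}
            (fun l' => Tm R A (l'.val.map (fun e => e + 1)))
            ⟨l.map (fun e => e - 1), hl⟩ (lcast R A (mapshift l).symm y) := by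
  rw [pushDown, DirectSum.toModule_lof, dif_pos hl]
  rfl

/-- Left inverse of `pushDown` on nonempty lists. -/
noncomputable def pullUp : Bar R A →ₗ[R] DirectSum (List ℤ) (fun l => Tm R A l) :=
  DirectSum.toModule R _ _ (fun es =>
    sgnz (kexp (es.val.map (fun e => e + 1))) •
      DirectSum.lof R (List ℤ) (fun l => Tm R A l) (es.val.map (fun e => e + 1)))

lemma pullUp_pushDown_lof (l : List ℤ) (hl : l ≠ []) (y : Tm R A l) :
    pullUp (pushDown R A (DirectSum.lof R (List ℤ) (fun l => Tm R A l) l y)) =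
      DirectSum.lof R (List ℤ) (fun l => Tm R A l) l y := by
  rw [pushDown_lof l (by simpa using hl), map_zsmul, pullUp, DirectSum.toModule_lof,
    LinearMap.smul_apply, lof_lcast, mapshift, smul_smul, sgnz_mul_self, one_smul]

lemma pullUp_pushDown_extPsi
    (ψk : (a : ℤ) → A a →ₗ[R] DirectSum (List ℤ) (fun l => Tm R A l))
    (hk : ∀ a x, (ψk a x) [] = 0) (ds : List ℤ) (i : ℕ) (y : Tm R A ds) :
    pullUp (pushDown R A (extPsi R A ψk ds i y)) = extPsi R A ψk ds i y := by
  by_cases h : i < ds.length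
  swap
  · rw [extPsi, dif_neg h]; simp
  rw [extPsi_eq ψk ds i h]
  obtain ⟨t, rfl⟩ := (((lcast R A (list_split_at ds i h)).trans
    (tsplit R A (ds.take i) (ds.getD i 0 :: ds.drop (i + 1)))).symm).surjective y
  rw [LinearEquiv.symm_trans_apply, LinearEquiv.apply_symm_apply, LinearEquiv.apply_symm_apply]
  induction t using TensorProduct.induction_on with
  | zero => simp
  | add a b ha hb => simp only [map_add, ha, hb]
  | tmul u w =>
    change A (ds.getD i 0) ⊗[R] Tm R A (ds.drop (i + 1)) at w
    induction w using TensorProduct.induction_on with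
    | zero =>
      erw [TensorProduct.tmul_zero]
      simp
    | add a b ha hb =>
      erw [TensorProduct.tmul_add]
      simp only [map_add, ha, hb]
    | tmul x v =>
      change pullUp (pushDown R A (extCore ψk _ _ _ (u ⊗ₜ[R] tcons x v))) =
        extCore ψk _ _ _ (u ⊗ₜ[R] tcons x v)
      rw [extCore_tmul]
      classical
      rw [← DirectSum.sum_support_of (ψk _ x)]
      simp only [map_sum]
      apply Finset.sum_congr rfl
      intro l hl
      have hl0 : l ≠ [] := by
        rintro rfl
        exact (DFinsupp.mem_support_iff.mp hl) (hk _ _)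
      rw [← DirectSum.lof_eq_of R, DirectSum.toModule_lof, LinearMap.comp_apply,
        pullUp_pushDown_lof _ (by simp [hl0])]

lemma cobarD_pushDown_lof (k : ℕ)
    (ψ : (k : ℕ) → (a : ℤ) → A a →ₗ[R] DirectSum (List ℤ) (fun l => Tm R A l))
    (l : List ℤ) (hl : l ≠ []) (y : Tm R A l) :
    cobarD R A k ψ (pushDown R A (DirectSum.lof R (List ℤ) (fun l => Tm R A l) l y)) =
      ∑ i ∈ Finset.range l.length, ((-1 : ℤ) ^ (i * (k + 1) + k * (l.length + 1))) •
        pushDown R A (extPsiTotal R A k i ψ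
          (DirectSum.lof R (List ℤ) (fun l => Tm R A l) l y)) := by
  rw [pushDown_lof l (by simpa using hl), map_zsmul, cobarD, DirectSum.toModule_lof]
  simp only [List.length_map, LinearMap.sum_apply, Finset.smul_sum]
  apply Finset.sum_congr rfl
  intro i _
  rw [extPsiTotal, DirectSum.toModule_lof, LinearMap.smul_apply, LinearMap.smul_apply,
    LinearMap.comp_apply, extPsi_lcast, map_zsmul, smul_smul, smul_smul, mapshift]
  congr 1
  rw [add_assoc, pow_add _ (l.length / 2), ← kexp_shift]
  have e1 := sgnz_mul_self (kexp l)
  have e2 := sgnz_mul_self (kexp (l.map (fun e => e - 1)))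
  generalize sgnz (kexp l) = p at *
  generalize sgnz (kexp (l.map (fun e => e - 1))) = q at *
  generalize sgnz (((k : ℤ) - 2) * (l.take i).sum) = w at *
  generalize (-1 : ℤ) ^ (i * (k + 1) + k * (l.length + 1)) = v at *
  linear_combination (v * w * q * q) * e1 + v * w * e2

end helpers

/-- If `(A, ψⁿ)_{n≥1}` is an `A_∞`-coalgebra — the operations
`ψ^k : A → A^{⊗k}` are homogeneous of degree `k−2` and the derivation-type map `d` on
`⊕_{n≥1}(↓A)^{⊗n}` satisfies `d² = 0` (stated blockwise: the part of `d²` shifting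
tensor length by `s` vanishes for every `s`, i.e. `Σ_{k+k'=s+2} D_k ∘ D_{k'} = 0`) —
then for every `n ≥ 1` the quadratic relations
`Σ_{ℓ=0}^{n−1} Σ_{i=0}^{n−ℓ−1} (−1)^{ℓ(n+i+1)} ψ^{ℓ+1}_{i,n−ℓ−1−i} ∘ ψ^{n−ℓ} = 0`
hold as maps `A → A^{⊗n}` (with values in `⊕_l T(l)`, which contains each `(A^{⊗n})_m`
as the sum of the components of length `n`). -/
theorem statement19 (R : Type u) [CommRing R] (A : ℤ → Type u)
    [∀ i, AddCommGroup (A i)] [∀ i, Module R (A i)]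
    (ψ : (k : ℕ) → (a : ℤ) → A a →ₗ[R] DirectSum (List ℤ) (fun l => Tm R A l))
    (hhom : ∀ k, 1 ≤ k → ∀ (a : ℤ) (x : A a) (l : List ℤ),
      (ψ k a x) l ≠ 0 → l.length = k ∧ l.sum = a + ((k : ℤ) - 2))
    (hd : ∀ s : ℕ,
      (∑ k ∈ Finset.Icc 1 (s + 1), (cobarD R A k ψ) ∘ₗ (cobarD R A (s + 2 - k) ψ)) = 0) :
    ∀ n : ℕ, 1 ≤ n → ∀ a : ℤ,
      (∑ l ∈ Finset.range n, ∑ i ∈ Finset.range (n - l),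
        ((-1 : ℤ) ^ (l * (n + i + 1))) •
          ((extPsiTotal R A (l + 1) i ψ) ∘ₗ (ψ (n - l) a))) = 0 := by
  intro n hn a
  obtain ⟨e, rfl⟩ : ∃ e : ℤ, a = e + 1 := ⟨a - 1, by ring⟩
  have hk0 : ∀ k, 1 ≤ k → ∀ (a : ℤ) (x : A a), (ψ k a x) [] = 0 := by
    intro k hk a x
    by_contra h
    have := (hhom k hk a x [] h).1
    simp at this
    omega
  -- the composite on a tensor of length one
  have hD : ∀ k k' : ℕ, 1 ≤ k' → ∀ x : A (e + 1),
      cobarD R A k ψ (cobarD R A k' ψ (DirectSum.lof R {l' : List ℤ // l' ≠ []}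
            (fun l' => Tm R A (l'.val.map (fun e => e + 1))) ⟨[e], by simp⟩
            (tcons x tone : Tm R A [e + 1]))) =
      ∑ i ∈ Finset.range k', ((-1 : ℤ) ^ (i * (k + 1) + k * (k' + 1))) •
        pushDown R A (extPsiTotal R A k i ψ (ψ k' (e + 1) x)) := by
    intro k k' hk' x
    have h1 : cobarD R A k' ψ (DirectSum.lof R {l' : List ℤ // l' ≠ []}
            (fun l' => Tm R A (l'.val.map (fun e => e + 1))) ⟨[e], by simp⟩
            (tcons x tone : Tm R A [e + 1])) =
        pushDown R A (ψ k' (e + 1) x) := by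
      rw [cobarD, DirectSum.toModule_lof]
      have hs : (-1 : ℤ) ^ (k' * 2) = 1 := by rw [mul_comm, pow_mul]; simp
      simp [kexp, sgnz, hs]
      exact congrArg _ (extPsi_single (ψ k') (e + 1) x)
    classical
    rw [h1, ← DirectSum.sum_support_of (ψ k' (e + 1) x)]
    simp only [map_sum, Finset.smul_sum]
    rw [Finset.sum_comm]
    apply Finset.sum_congr rfl
    intro l hl
    have hlen := (hhom k' hk' (e + 1) x l (DFinsupp.mem_support_iff.mp hl)).1
    have hl0 : l ≠ [] := by
      rintro rfl
      simp at hlen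
      omega
    rw [← DirectSum.lof_eq_of R, cobarD_pushDown_lof k ψ l hl0, hlen]
  ext1 x
  set S := (∑ l ∈ Finset.range n, ∑ i ∈ Finset.range (n - l),
        ((-1 : ℤ) ^ (l * (n + i + 1))) •
          ((extPsiTotal R A (l + 1) i ψ) ∘ₗ (ψ (n - l) (e + 1)))) x with hS
  have hS' : S = ∑ l ∈ Finset.range n, ∑ i ∈ Finset.range (n - l),
        ((-1 : ℤ) ^ (l * (n + i + 1))) •
          (extPsiTotal R A (l + 1) i ψ (ψ (n - l) (e + 1) x)) := by
    rw [hS]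
    simp only [LinearMap.sum_apply, LinearMap.smul_apply, LinearMap.comp_apply]
  have hinv : pullUp (pushDown R A S) = S := by
    rw [hS']
    simp only [map_sum, map_zsmul]
    refine Finset.sum_congr rfl fun l _ => Finset.sum_congr rfl fun i _ => ?_
    congr 1
    generalize ψ (n - l) (e + 1) x = z
    induction z using DirectSum.induction_on with
    | zero => simp
    | add a b ha hb => simp only [map_add, ha, hb]
    | of d y =>
      rw [← DirectSum.lof_eq_of R, extPsiTotal, DirectSum.toModule_lof, LinearMap.smul_apply]
      simp only [map_zsmul]
      rw [pullUp_pushDown_extPsi _ (hk0 (l + 1) (by omega))]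
  have hzero : pushDown R A S = 0 := by
    have h := congrArg (fun f => f (DirectSum.lof R {l' : List ℤ // l' ≠ []}
            (fun l' => Tm R A (l'.val.map (fun e => e + 1))) ⟨[e], by simp⟩
            (tcons x tone : Tm R A [e + 1]))) (hd (n - 1))
    simp only [LinearMap.sum_apply, LinearMap.comp_apply, LinearMap.zero_apply] at h
    have h2 : pushDown R A S = (-1 : ℤ) ^ (n + 1) • (0 : Bar R A) := by
      rw [← h, hS']
      simp only [map_sum, map_zsmul, Finset.smul_sum]
      have hn1 : n - 1 + 1 = n := by omega
      rw [hn1, Finset.range_eq_Ico, Finset.sum_Ico_eq_sum_range,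
        ← Finset.Ico_succ_right_eq_Icc, Finset.sum_Ico_eq_sum_range]
      apply Finset.sum_congr (by simp)
      intro l hl
      have hln : l < n := by simpa using hl
      have hk' : n - 1 + 2 - (1 + l) = n - l := by omega
      rw [hk', hD _ _ (by omega), Finset.smul_sum, zero_add, add_comm 1 l]
      refine Finset.sum_congr (by simp) fun i _ => ?_
      rw [smul_smul]
      congr 1
      obtain ⟨m, rfl⟩ : ∃ m, n = l + m := ⟨n - l, by omega⟩
      rw [Nat.add_sub_cancel_left, ← pow_add]
      apply neg_one_pow_congr
      simp only [Nat.even_add, Nat.even_mul, Nat.even_add_one]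
      tauto
    rw [h2, smul_zero]
  rw [← hinv, hzero, map_zero, LinearMap.zero_apply]

end SU19
end
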